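/- Let F₉ be the field with nine elements and let γ ∈ F₉ satisfy γ² = γ + 1. There exist elements u, v, ω of the rational function field F₉(s,t) in two variables over F₉ such that u and v are algebraically independent over F₉ and γ·ω² = u⁴ + v⁴ + 1. -/

import Mathlib

open MvPolynomial in
lemma hom_scale {k S : Type*} [CommRing k] [CommRing S] [Algebra k S] (F : MvPolynomial (Fin 2) k) (d : ℕ)
    (hF : F.IsHomogeneous d) (r x y : S) :
    aeval ![r * x, r * y] F = r ^ d * aeval ![x, y] F := by
  have : (![r * x, r * y] : Fin 2 → S) = fun i => r * ![x, y] i := by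
    funext i; fin_cases i <;> rfl
  rw [this, aeval_def, aeval_def, eval₂_eq', eval₂_eq', Finset.mul_sum]
  refine Finset.sum_congr rfl fun m hm => ?_
  have hd := hF (mem_support_iff.mp hm)
  simp only [mul_pow, Finset.prod_mul_distrib, Finset.prod_pow_eq_pow_sum]
  have : ∑ i, m i = d := by
    rw [← hd, Finsupp.weight_apply, Finsupp.sum_fintype] <;> simp
  rw [this]; ring

open MvPolynomial in
lemma hom_dehom_ne {k Ω : Type*} [Field k] [Field Ω] [Infinite Ω] [Algebra k Ω]
    (F : MvPolynomial (Fin 2) k) (d : ℕ) (hF : F.IsHomogeneous d) (h0 : F ≠ 0) :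
    aeval ![(1 : Polynomial Ω), Polynomial.X] F ≠ 0 := by
  intro h
  have h1 : (X 0 : MvPolynomial (Fin 2) Ω) * map (algebraMap k Ω) F = 0 := by
    apply MvPolynomial.funext
    intro x
    rw [map_mul, eval_X, map_zero, eval_map]
    by_cases hx : x 0 = 0
    · simp [hx]
    have h2 := hom_scale F d hF (x 0) 1 (x 1 / x 0)
    have h3 : aeval ![(1 : Ω), x 1 / x 0] F = 0 := by
      have := congrArg (Polynomial.aeval (R := Ω) (x 1 / x 0)) h
      rw [map_zero] at this
      rw [← this]
      change _ = ((Polynomial.aeval (R := Ω) (x 1 / x 0)).restrictScalars k).comp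
        (aeval ![(1 : Polynomial Ω), Polynomial.X]) F
      congr 1
      apply MvPolynomial.algHom_ext
      intro i; fin_cases i <;> simp
    rw [h3, mul_zero] at h2
    have h4 : (![x 0 * 1, x 0 * (x 1 / x 0)] : Fin 2 → Ω) = x := by
      funext i; fin_cases i
      · simp
      · simp; field_simp
    rw [h4, aeval_def] at h2
    rw [h2, mul_zero]
  rcases mul_eq_zero.mp h1 with h | h
  · exact X_ne_zero _ h
  · exact h0 (map_injective _ (algebraMap k Ω).injective (by rw [h, map_zero]))

open MvPolynomial in
lemma div_step {k R K : Type*} [Field k] [CommRing R] [IsDomain R] [Algebra k R] [Field K] [Algebra R K]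
    [Algebra k K] [IsScalarTower k R K] [IsFractionRing R K] (D N a b Z s : R) (hZ : Z ≠ 0) (hD : D ≠ 0)
    (F : MvPolynomial (Fin 2) k)
    (h : aeval ![algebraMap R K (a * D + N) / algebraMap R K (Z * D),
      algebraMap R K (b * D + s * N) / algebraMap R K (Z * D)] F = 0) :
    D ∣ N ^ F.totalDegree * aeval ![1, s] (homogeneousComponent F.totalDegree F) := by
  set d := F.totalDegree with hd
  have hE : algebraMap R K (Z * D) ≠ 0 := by
    rw [Ne, IsFractionRing.to_map_eq_zero_iff]; exact mul_ne_zero hZ hD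
  have key : ∑ i ∈ Finset.range (d + 1), (Z * D) ^ (d - i) *
      aeval ![a * D + N, b * D + s * N] (homogeneousComponent i F) = 0 := by
    apply IsFractionRing.injective R K
    rw [map_zero, map_sum]
    have h2 := congrArg (fun z => algebraMap R K (Z * D) ^ d * z) h
    simp only [mul_zero] at h2
    rw [← h2]
    conv_rhs => rw [← sum_homogeneousComponent F, map_sum, Finset.mul_sum]
    refine Finset.sum_congr rfl fun i hi => ?_
    have hi : i ≤ d := Nat.lt_succ_iff.mp (Finset.mem_range.mp hi)
    have h3 := hom_scale (homogeneousComponent i F) i (homogeneousComponent_isHomogeneous i F)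
      (algebraMap R K (Z * D)) (algebraMap R K (a * D + N) / algebraMap R K (Z * D))
      (algebraMap R K (b * D + s * N) / algebraMap R K (Z * D))
    rw [mul_div_cancel₀ _ hE, mul_div_cancel₀ _ hE] at h3
    have h4 : algebraMap R K (aeval ![a * D + N, b * D + s * N] (homogeneousComponent i F))
        = aeval ![algebraMap R K (a * D + N), algebraMap R K (b * D + s * N)]
          (homogeneousComponent i F) := by
      rw [← aeval_algebraMap_apply]
      congr 2
      funext j; fin_cases j <;> rfl
    rw [map_mul, map_pow, h4, h3, ← mul_assoc, ← pow_add, Nat.sub_add_cancel hi]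
  rw [Finset.sum_range_succ, Nat.sub_self, pow_zero, one_mul] at key
  have h5 : D ∣ aeval ![a * D + N, b * D + s * N] (homogeneousComponent d F) := by
    rw [eq_neg_of_add_eq_zero_right key, dvd_neg]
    refine Finset.dvd_sum fun i hi => ?_
    have hi := Finset.mem_range.mp hi
    exact Dvd.dvd.mul_right (dvd_pow (Dvd.intro_left _ rfl) (by omega)) _
  have h6 := hom_scale (homogeneousComponent d F) d (homogeneousComponent_isHomogeneous d F) N 1 s
  rw [← h6]
  rw [← Ideal.mem_span_singleton, ← Ideal.Quotient.eq_zero_iff_mem] at h5 ⊢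
  rw [← h5, ← Ideal.Quotient.mkₐ_eq_mk k, ← AlgHom.comp_apply, ← AlgHom.comp_apply]
  congr 1
  have hD0 : Ideal.Quotient.mkₐ k (Ideal.span {D}) D = 0 := by
    rw [Ideal.Quotient.mkₐ_eq_mk, Ideal.Quotient.eq_zero_iff_mem]
    exact Ideal.mem_span_singleton_self D
  apply MvPolynomial.algHom_ext
  intro i; fin_cases i
  · simp only [AlgHom.comp_apply, aeval_X]
    simp [map_add, map_mul, hD0, -Ideal.Quotient.mkₐ_eq_mk]
  · simp only [AlgHom.comp_apply, aeval_X]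
    simp [map_add, map_mul, hD0, mul_comm, -Ideal.Quotient.mkₐ_eq_mk]

open MvPolynomial in
lemma indep_key {k Ω : Type*} [Field k] [Field Ω] [Infinite Ω] [Algebra k Ω]
    (D N a b Z : MvPolynomial (Fin 2) k) (hZ : Z ≠ 0) (s0 t0 t1 : Ω)
    (h1 : aeval ![s0, t0] D = 0) (h2 : aeval ![s0, t0] N ≠ 0) (h3 : aeval ![s0, t1] D ≠ 0) :
    AlgebraicIndependent k
      ![algebraMap _ (FractionRing (MvPolynomial (Fin 2) k)) (a * D + N) /
          algebraMap _ (FractionRing (MvPolynomial (Fin 2) k)) (Z * D),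
        algebraMap _ (FractionRing (MvPolynomial (Fin 2) k)) (b * D + X 0 * N) /
          algebraMap _ (FractionRing (MvPolynomial (Fin 2) k)) (Z * D)] := by
  have hD : D ≠ 0 := by rintro rfl; simp at h3
  rw [algebraicIndependent_iff]
  intro F hF
  by_contra hF0
  have hdvd := div_step D N a b Z (X 0) hZ hD F hF
  set d := F.totalDegree
  have hH := homogeneousComponent_isHomogeneous d F
  have hH0 : homogeneousComponent d F ≠ 0 := by
    intro h0
    obtain ⟨m, hm, hmd⟩ := Finset.exists_mem_eq_sup F.support (support_nonempty.mpr hF0)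
      (fun m => m.sum fun _ e => e)
    have h4 := congrArg (coeff m) h0
    rw [coeff_homogeneousComponent, coeff_zero, if_pos] at h4
    · exact (mem_support_iff.mp hm) h4
    · exact hmd.symm
  set H := homogeneousComponent d F
  have hc := hom_dehom_ne (Ω := Ω) H d hH hH0
  set c := aeval ![(1 : Polynomial Ω), Polynomial.X] H with hcdef
  -- map to Ω[t][s]
  let Φ : MvPolynomial (Fin 2) k →ₐ[k] Polynomial (Polynomial Ω) :=
    aeval ![Polynomial.X, Polynomial.C Polynomial.X]
  have hΦ : ∀ (P : MvPolynomial (Fin 2) k) (y : Ω),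
      ((Φ P).eval (Polynomial.C s0)).eval y = aeval ![s0, y] P := by
    intro P y
    induction P using MvPolynomial.induction_on with
    | C r => simp [Φ, Polynomial.algebraMap_apply]
    | add p q hp hq => simp [hp, hq]
    | mul_X p i hp =>
      rw [map_mul, map_mul, Polynomial.eval_mul, Polynomial.eval_mul, hp]
      fin_cases i <;> simp [Φ]
  have hΦc : Φ (aeval ![1, X 0] H) = c.map Polynomial.C := by
    rw [hcdef, ← Polynomial.coe_mapRingHom]
    generalize H = P
    induction P using MvPolynomial.induction_on with
    | C r => simp [Φ, Polynomial.algebraMap_apply]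
    | add p q hp hq => simp only [map_add, hp, hq]
    | mul_X p i hp =>
      rw [map_mul, map_mul, map_mul, map_mul, hp]
      fin_cases i <;> simp [Φ]
  obtain ⟨q, hq, hqd⟩ := Polynomial.exists_eq_pow_rootMultiplicity_mul_and_not_dvd c hc s0
  set e := c.rootMultiplicity s0
  obtain ⟨G, hG⟩ := map_dvd Φ hdvd
  rw [map_mul, map_pow, hΦc, hq] at hG
  simp only [Polynomial.map_mul, Polynomial.map_pow, Polynomial.map_sub, Polynomial.map_X,
    Polynomial.map_C] at hG
  set p : Polynomial (Polynomial Ω) := Polynomial.X - Polynomial.C (Polynomial.C s0) with hp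
  have hpp : Prime p := Polynomial.prime_X_sub_C _
  have hpD : ¬ p ∣ Φ D := by
    intro h
    rw [hp, Polynomial.dvd_iff_isRoot] at h
    apply h3
    rw [← hΦ, h.eq_zero, Polynomial.eval_zero]
  have hpG : p ^ e ∣ G := by
    apply hpp.pow_dvd_of_dvd_mul_left e hpD
    rw [← hG]
    exact ⟨Φ N ^ d * q.map Polynomial.C, by ring⟩
  obtain ⟨G', rfl⟩ := hpG
  have hG2 : Φ N ^ d * q.map Polynomial.C = Φ D * G' := by
    apply mul_left_cancel₀ (pow_ne_zero e hpp.ne_zero)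
    linear_combination hG
  have hG3 := congrArg (fun P => (P.eval (Polynomial.C s0)).eval t0) hG2
  simp only [Polynomial.eval_mul, Polynomial.eval_pow, hΦ, h1, zero_mul] at hG3
  rcases mul_eq_zero.mp hG3 with h | h
  · exact pow_ne_zero d h2 h
  · apply hqd
    rw [Polynomial.dvd_iff_isRoot]
    rw [Polynomial.eval_map, Polynomial.eval₂_at_apply, Polynomial.eval_C] at h
    exact h
/- identity of the curve, in any comm ring of char 3 -/
lemma curve_id {S : Type*} [CommRing S] (g t : S) (h3 : (3 : S) = 0) (hg : g ^ 2 = g + 1) :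
    (1 - g * t ^ 2 + (g - 1) * t ^ 6) ^ 4 + (g + (1 + g) * t ^ 2 + (1 - g) * t ^ 4 + t ^ 6) ^ 4
      + (t ^ 4) ^ 4 = g * (t * (1 + g * t ^ 2 - t ^ 8 - g * t ^ 10)) ^ 2 := by
  grind

lemma final_id {K : Type*} [Field K] (h3 : (3 : K) = 0) (g X Y Z W s : K) (hg : g ≠ 0) (hZ : Z ≠ 0)
    (hW : W ≠ 0) (hf : X ^ 4 + Y ^ 4 + Z ^ 4 = g * W ^ 2) (l : K)
    (hl : l * ((g * W ^ 2) ^ 3 * (1 + s ^ 4) - (X ^ 3 + Y ^ 3 * s) ^ 4) =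
      (g * W ^ 2) * ((X ^ 3 + Y ^ 3 * s) ^ 3 - (X + Y * s ^ 3) * (g * W ^ 2) ^ 2)) :
    g * ((W - l * (X ^ 3 + Y ^ 3 * s) / (g * W) + l ^ 2 * (X ^ 3 + Y ^ 3 * s) ^ 2 / (g ^ 2 * W ^ 3)) / Z ^ 2) ^ 2
      = ((X + l) / Z) ^ 4 + ((Y + l * s) / Z) ^ 4 + 1 := by
  have e1 : (X + l) ^ 4 + (Y + l * s) ^ 4 + Z ^ 4 = g * W ^ 2 + l * (X ^ 3 + Y ^ 3 * s) +
      l ^ 3 * (X + Y * s ^ 3) + l ^ 4 * (1 + s ^ 4) := by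
    linear_combination hf + (X ^ 3 * l + 2 * X ^ 2 * l ^ 2 + X * l ^ 3 + Y ^ 3 * l * s + 2 * Y ^ 2 * l ^ 2 * s ^ 2
      + Y * l ^ 3 * s ^ 3) * h3
  generalize X ^ 3 + Y ^ 3 * s = f1 at *
  generalize X + Y * s ^ 3 = f3 at *
  generalize 1 + s ^ 4 = f4 at *
  have e2 : ((X + l) / Z) ^ 4 + ((Y + l * s) / Z) ^ 4 + 1 = ((X + l) ^ 4 + (Y + l * s) ^ 4 + Z ^ 4) / Z ^ 4 := by
    field_simp
  rw [e2, e1]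
  field_simp
  linear_combination (-l ^ 3) * hl + (-(g * W ^ 2) * l ^ 3 * f1 ^ 3 - (g * W ^ 2) ^ 3 * l * f1
    + (g * W ^ 2) ^ 2 * l ^ 2 * f1 ^ 2) * h3

lemma pt_id {S : Type*} [Field S] (g z : S) (h3 : (3 : S) = 0) (hz : z ^ 2 = g) (hg : g ^ 2 = g + 1)
    (t s X Y W f0 f1 f3 f4 : S) (ht : t = 1 + z ^ 3) (hs : s = - z - z ^ 2)
    (hX : X = 1 - g * t ^ 2 + (g - 1) * t ^ 6)
    (hY : Y = g + (1 + g) * t ^ 2 + (1 - g) * t ^ 4 + t ^ 6)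
    (hW : W = t * (1 + g * t ^ 2 - t ^ 8 - g * t ^ 10))
    (hf0 : f0 = g * W ^ 2) (hf1 : f1 = X ^ 3 + Y ^ 3 * s) (hf3 : f3 = X + Y * s ^ 3)
    (hf4 : f4 = 1 + s ^ 4) :
    f0 ^ 3 * f4 - f1 ^ 4 = 0 ∧ f0 * (f1 ^ 3 - f3 * f0 ^ 2) ≠ 0 := by
  subst hz
  have hT : t ^ 2 = 2 + 2 * z ^ 2 + 2 * z ^ 3 := by subst ht; clear * - h3 hg; grind
  have hT2 : t ^ 4 = (2 + 2 * z ^ 2 + 2 * z ^ 3) ^ 2 := by rw [← hT]; ring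
  have hT3 : t ^ 6 = (2 + 2 * z ^ 2 + 2 * z ^ 3) ^ 3 := by rw [← hT]; ring
  have hX' : X = 2 + 2 * z ^ 3 := by rw [hX, hT, hT3]; clear * - h3 hg; grind
  have hY' : Y = z + 2 * z ^ 2 + 2 * z ^ 3 := by rw [hY, hT, hT2, hT3]; clear * - h3 hg; grind
  have hf1' : f1 = z + z ^ 2 := by rw [hf1, hX', hY', hs]; clear * - h3 hg; grind
  have hf3' : f3 = 1 + 2 * z + z ^ 2 + z ^ 3 := by rw [hf3, hX', hY', hs]; clear * - h3 hg; grind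
  have hf4' : f4 = 1 + 2 * z + z ^ 2 := by rw [hf4, hs]; clear * - h3 hg; grind
  have hf0' : f0 = 2 + 2 * z + z ^ 3 := by
    rw [hf0, hW, ← curve_id _ t h3 hg, ← hX, ← hY, hX', hY', hT2]; clear * - h3 hg; grind
  refine ⟨by rw [hf0', hf1', hf4']; clear * - h3 hg; grind, ?_⟩
  have : f0 * (f1 ^ 3 - f3 * f0 ^ 2) = 1 + 2 * z + z ^ 2 + z ^ 3 := by
    rw [hf0', hf1', hf3']; clear * - h3 hg; grind
  rw [this]
  intro h
  have : (1 : S) = 0 := by clear * - h h3 hg; grind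
  exact one_ne_zero this

lemma frac_u {K : Type*} [Field K] (x d n z : K) (hd : d ≠ 0) (hz : z ≠ 0) :
    (x * d + n) / (z * d) = (x + n / d) / z := by field_simp

lemma frac_v {K : Type*} [Field K] (y d n z s : K) (hd : d ≠ 0) (hz : z ≠ 0) :
    (y * d + s * n) / (z * d) = (y + n / d * s) / z := by field_simp

open MvPolynomial in
lemma main_gen {k : Type*} (Ω : Type*) [Field k] [Field Ω] [IsAlgClosed Ω] [Algebra k Ω] (γ : k) (hγ : γ ^ 2 = γ + 1) (h3k : (3 : k) = 0) :
    ∃ u v ω : FractionRing (MvPolynomial (Fin 2) k),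
      AlgebraicIndependent k ![u, v] ∧
      algebraMap k (FractionRing (MvPolynomial (Fin 2) k)) γ
        * ω ^ 2 = u ^ 4 + v ^ 4 + 1 := by
  have hγ0 : γ ≠ 0 := by rintro rfl; simp at hγ
  -- the point of specialization
  obtain ⟨z, hz⟩ := IsAlgClosed.exists_pow_nat_eq (algebraMap k Ω γ) (n := 2) (by norm_num)
  have h3Ω : (3 : Ω) = 0 := by
    rw [← map_ofNat (algebraMap k Ω) 3, h3k, map_zero]
  have hgΩ : (algebraMap k Ω γ) ^ 2 = algebraMap k Ω γ + 1 := by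
    rw [← map_pow, hγ, map_add, map_one]
  have h3R : (3 : MvPolynomial (Fin 2) k) = 0 := by
    rw [← map_ofNat (C (σ := Fin 2) (R := k)) 3, h3k, map_zero]
  have hgR : (C γ : MvPolynomial (Fin 2) k) ^ 2 = C γ + 1 := by
    rw [← map_pow, hγ, map_add, map_one]
  let s : MvPolynomial (Fin 2) k := X 0
  let t : MvPolynomial (Fin 2) k := X 1
  let g : MvPolynomial (Fin 2) k := C γ
  let x : MvPolynomial (Fin 2) k := 1 - g * t ^ 2 + (g - 1) * t ^ 6
  let y : MvPolynomial (Fin 2) k := g + (1 + g) * t ^ 2 + (1 - g) * t ^ 4 + t ^ 6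
  let w : MvPolynomial (Fin 2) k := t * (1 + g * t ^ 2 - t ^ 8 - g * t ^ 10)
  let f0 := g * w ^ 2
  let f1 := x ^ 3 + y ^ 3 * s
  let f3 := x + y * s ^ 3
  let f4 := 1 + s ^ 4
  let D := f0 ^ 3 * f4 - f1 ^ 4
  let N := f0 * (f1 ^ 3 - f3 * f0 ^ 2)
  have hcurve : x ^ 4 + y ^ 4 + (t ^ 4) ^ 4 = g * w ^ 2 := curve_id g t h3R hgR
  let τ : Ω := 1 + z ^ 3
  let σ : Ω := - z - z ^ 2
  have hpt := pt_id (algebraMap k Ω γ) z h3Ω hz hgΩ τ σ _ _ _ _ _ _ _ rfl rfl rfl rfl rfl rfl rfl rfl rfl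
  have hs : ∀ r : Ω, aeval ![σ, r] s = σ := fun r => by simp [s]
  have ht : ∀ r : Ω, aeval ![σ, r] t = r := fun r => by simp [t]
  have hg : ∀ r : Ω, aeval ![σ, r] g = algebraMap k Ω γ := fun r => by simp [g]
  have h1 : aeval ![σ, τ] D = 0 := by
    rw [← hpt.1]
    simp only [D, f0, f1, f4, x, y, w, map_add, map_sub, map_mul, map_pow, map_one, hs, ht, hg]
  have h2 : aeval ![σ, τ] N ≠ 0 := by
    convert hpt.2
    simp only [N, f0, f1, f3, x, y, w, map_add, map_sub, map_mul, map_pow, map_one, hs, ht, hg]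
  have h3 : aeval ![σ, (0 : Ω)] D ≠ 0 := by
    simp only [D, f0, f1, f4, x, y, w, map_add, map_sub, map_mul, map_pow, map_one, hs, ht, hg]
    rw [← hz]
    rw [← hz] at hgΩ
    have e : (1 + (z ^ 2) ^ 3 * σ) ≠ 0 := by
      simp only [σ]
      intro h
      have : (1 : Ω) = 0 := by clear * - h h3Ω hgΩ; grind
      exact one_ne_zero this
    have e2 := pow_ne_zero 4 e
    contrapose! e2
    rw [← neg_eq_zero, ← e2]
    ring
  have hD : D ≠ 0 := by intro h; rw [h, map_zero] at h3; exact h3 rfl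
  have htn : t ≠ 0 := X_ne_zero _
  have hZ : t ^ 4 ≠ 0 := pow_ne_zero _ htn
  have hw : w ≠ 0 := by
    intro h
    apply h2
    simp [N, f0, h]
  have hind := indep_key D N x y (t ^ 4) hZ σ τ 0 h1 h2 h3
  set K := FractionRing (MvPolynomial (Fin 2) k)
  let ι := algebraMap (MvPolynomial (Fin 2) k) K
  have hinj : ∀ p, p ≠ 0 → ι p ≠ 0 := fun p hp => by
    rw [Ne, IsFractionRing.to_map_eq_zero_iff]; exact hp
  have h3K : (3 : K) = 0 := by
    rw [← map_ofNat ι 3, h3R, map_zero]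
  have hfin := final_id h3K (ι g) (ι x) (ι y) (ι (t ^ 4)) (ι w) (ι s)
    (hinj g (by simpa [g] using hγ0)) (hinj _ hZ) (hinj _ hw)
    (by simp only [← map_pow, ← map_add, ← map_mul, hcurve]) (ι N / ι D)
    (by
      rw [div_mul_eq_mul_div, div_eq_iff (hinj _ hD)]
      simp only [D, N, f0, f1, f3, f4, map_add, map_sub, map_mul, map_pow, map_one])
  refine ⟨_, _, (ι w - ι N / ι D * (ι x ^ 3 + ι y ^ 3 * ι s) / (ι g * ι w) +
      (ι N / ι D) ^ 2 * (ι x ^ 3 + ι y ^ 3 * ι s) ^ 2 / (ι g ^ 2 * ι w ^ 3)) / ι (t ^ 4) ^ 2, hind, ?_⟩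
  · have eg : algebraMap k K γ = ι g := by
      rw [IsScalarTower.algebraMap_apply k (MvPolynomial (Fin 2) k) K]; rfl
    have hD' := hinj _ hD
    have hZ' := hinj _ hZ
    have eu : ι (x * D + N) / ι (t ^ 4 * D) = (ι x + ι N / ι D) / ι (t ^ 4) := by
      rw [map_add ι, map_mul ι x D, map_mul ι (t ^ 4) D]; exact frac_u _ _ _ _ hD' hZ'
    have ev : ι (y * D + X 0 * N) / ι (t ^ 4 * D) = (ι y + ι N / ι D * ι s) / ι (t ^ 4) := by
      change ι (y * D + s * N) / ι (t ^ 4 * D) = _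
      rw [map_add ι, map_mul ι y D, map_mul ι s N, map_mul ι (t ^ 4) D]; exact frac_v _ _ _ _ _ hD' hZ'
    rw [eg]
    refine hfin.trans ?_
    rw [← eu, ← ev]

/-- Unirationality of the del Pezzo surface `X₃ : γw² = x⁴ + y⁴ + z⁴` of degree 2
over `F₉`, where `γ ∈ F₉` satisfies `γ² = γ + 1` (case `i = 3` of Theorem 3.3):
there exist `u, v, ω` in the rational function field `F₉(s,t)` with `u, v`
algebraically independent over `F₉` and `γ·ω² = u⁴ + v⁴ + 1`. -/
theorem X3_unirational (γ : GaloisField 3 2) (hγ : γ ^ 2 = γ + 1) :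
    ∃ u v ω : FractionRing (MvPolynomial (Fin 2) (GaloisField 3 2)),
      AlgebraicIndependent (GaloisField 3 2) ![u, v] ∧
      algebraMap (GaloisField 3 2) (FractionRing (MvPolynomial (Fin 2) (GaloisField 3 2))) γ
        * ω ^ 2 = u ^ 4 + v ^ 4 + 1 := by
  have h3k : (3 : GaloisField 3 2) = 0 := by exact_mod_cast CharP.cast_eq_zero (GaloisField 3 2) 3
  exact main_gen (AlgebraicClosure (GaloisField 3 2)) γ hγ h3k
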